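/- Let k ≥ 1 and l ≥ 0 with k + 2l ≥ 3, and let Ω = {(x, w) ∈ (ℝ ∪ {∞})^k × H^l : the x-components are pairwise distinct and the w-components are pairwise distinct}, where ℝ ∪ {∞} ⊂ OnePoint ℂ is the boundary circle and H = {z ∈ ℂ : Im z > 0} is the open upper half-plane, with the subspace topology. Let SL(2,ℝ) act diagonally on Ω by the Möbius action. Then the map Φ : SL(2,ℝ) × Ω → Ω × Ω given by Φ(A, (x, w)) = (A•(x, w), (x, w)) is proper: the preimage under Φ of every compact subset of Ω × Ω is compact. -/

import Mathlib

open OnePoint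
open scoped Classical

/-- The Möbius action of `SL(2,ℂ)` on the Riemann sphere `OnePoint ℂ`. -/
noncomputable def mobius (A : Matrix.SpecialLinearGroup (Fin 2) ℂ) (z : OnePoint ℂ) :
    OnePoint ℂ :=
  match z with
  | Option.none =>
      if (A : Matrix (Fin 2) (Fin 2) ℂ) 1 0 = 0 then ∞
      else (((A : Matrix (Fin 2) (Fin 2) ℂ) 0 0 / (A : Matrix (Fin 2) (Fin 2) ℂ) 1 0 : ℂ) :
        OnePoint ℂ)
  | Option.some w =>
      if (A : Matrix (Fin 2) (Fin 2) ℂ) 1 0 * w + (A : Matrix (Fin 2) (Fin 2) ℂ) 1 1 = 0 then ∞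
      else ((((A : Matrix (Fin 2) (Fin 2) ℂ) 0 0 * w + (A : Matrix (Fin 2) (Fin 2) ℂ) 0 1) /
        ((A : Matrix (Fin 2) (Fin 2) ℂ) 1 0 * w + (A : Matrix (Fin 2) (Fin 2) ℂ) 1 1) : ℂ) :
        OnePoint ℂ)

/-- The embedding `SL(2,ℝ) → SL(2,ℂ)` induced by the inclusion `ℝ → ℂ`. -/
noncomputable def toC : Matrix.SpecialLinearGroup (Fin 2) ℝ →* Matrix.SpecialLinearGroup (Fin 2) ℂ :=
  Matrix.SpecialLinearGroup.map Complex.ofRealHom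

/-- `SL(2,ℝ)` carries its topology as a subset of the `2 × 2` real matrices. -/
instance : TopologicalSpace (Matrix.SpecialLinearGroup (Fin 2) ℝ) :=
  TopologicalSpace.induced (fun A => (A : Matrix (Fin 2) (Fin 2) ℝ)) inferInstance

/-- The boundary circle `ℝ ∪ {∞}` of the closed upper half-plane, inside the Riemann
sphere. -/
def boundaryCircle : Set (OnePoint ℂ) :=
  {z | z = ∞ ∨ ∃ r : ℝ, z = ((r : ℂ) : OnePoint ℂ)}

/-- The open upper half-plane `H = {z ∈ ℂ | Im z > 0}`, inside the Riemann sphere. -/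
def upperHalfPlane' : Set (OnePoint ℂ) :=
  {z | ∃ w : ℂ, 0 < w.im ∧ z = ((w : ℂ) : OnePoint ℂ)}

/-- The configuration space `Ω` of `k` pairwise distinct boundary marked points on
`ℝ ∪ {∞}` together with `l` pairwise distinct interior marked points in the open upper
half-plane. -/
def configSpace (k l : ℕ) : Set ((Fin k → OnePoint ℂ) × (Fin l → OnePoint ℂ)) :=
  {p | (∀ i, p.1 i ∈ boundaryCircle) ∧ Function.Injective p.1 ∧
       (∀ j, p.2 j ∈ upperHalfPlane') ∧ Function.Injective p.2}

/-!
If matrices `A_a ∈ SL(2, ℝ)` leave every compact set along an ultrafilter, the rescaled matrices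
`A_a / ‖A_a‖` converge to a nonzero real matrix `B`, which is singular because
`det (A_a / ‖A_a‖) = ‖A_a‖⁻² → 0`. Having rank one, `B` kills at most one point `p` of the Riemann
sphere and sends all the others to a single point `q`, which lies on the boundary circle because
`B` is real; moreover `A_a z_a → q` whenever `z_a → z ≠ p`. Hence `A_a` cannot move three points
with distinct limits to points that again have distinct limits: two of the limits differ from `p`,
so both images tend to `q`. Nor can the images of points that converge in the upper half-plane,
where `B` kills nothing, converge in the upper half-plane. So `A_a` converges as soon as the
configurations and their images do, and properness follows from the ultrafilter criterion for
compactness.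
-/

open Filter Topology Matrix

section HomogeneousCoordinates

variable {𝕜 : Type*} [Field 𝕜]

/-- The point `[v 0 : v 1]` of the projective line, which is identified with `OnePoint 𝕜` so that
`[1 : 0] = ∞`. The zero vector is sent to the junk value `∞`. -/
noncomputable def ofHomogeneous (v : Fin 2 → 𝕜) : OnePoint 𝕜 :=
  if v 1 = 0 then ∞ else ((v 0 / v 1 : 𝕜) : OnePoint 𝕜)

/-- The standard homogeneous coordinates of a point of `OnePoint 𝕜`: `[1 : 0]` for `∞` and
`[t : 1]` for `t ∈ 𝕜`. -/
def toHomogeneous (z : OnePoint 𝕜) : Fin 2 → 𝕜 :=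
  z.elim ![1, 0] fun t => ![t, 1]

/-- The Möbius action of `GL(2, 𝕜)`, extended to all matrices. It is meaningful when `M` does
not kill the homogeneous coordinates of `z`, and is `∞` otherwise. -/
noncomputable def matrixMobius (M : Matrix (Fin 2) (Fin 2) 𝕜) (z : OnePoint 𝕜) : OnePoint 𝕜 :=
  ofHomogeneous (M *ᵥ toHomogeneous z)

@[simp]
lemma toHomogeneous_infty : toHomogeneous (∞ : OnePoint 𝕜) = ![1, 0] := rfl

@[simp]
lemma toHomogeneous_coe (t : 𝕜) : toHomogeneous (t : OnePoint 𝕜) = ![t, 1] := rfl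

lemma toHomogeneous_ne_zero (z : OnePoint 𝕜) : toHomogeneous z ≠ 0 := by
  induction z using OnePoint.rec <;> simp

lemma det_toHomogeneous_ne_zero {z w : OnePoint 𝕜} (h : z ≠ w) :
    det (of ![toHomogeneous z, toHomogeneous w]) ≠ 0 := by
  induction z using OnePoint.rec <;> induction w using OnePoint.rec <;>
    simp_all [det_fin_two, sub_eq_zero]

lemma ofHomogeneous_smul {c : 𝕜} (hc : c ≠ 0) (v : Fin 2 → 𝕜) :
    ofHomogeneous (c • v) = ofHomogeneous v := by
  simp [ofHomogeneous, hc, mul_div_mul_left]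

lemma ofHomogeneous_eq_of_det_eq_zero {v w : Fin 2 → 𝕜} (hv : v ≠ 0) (hw : w ≠ 0)
    (h : det (of ![v, w]) = 0) : ofHomogeneous v = ofHomogeneous w := by
  have hdet : v 0 * w 1 = v 1 * w 0 := by simpa [det_fin_two, sub_eq_zero] using h
  have hv' : v 0 ≠ 0 ∨ v 1 ≠ 0 := by simpa [funext_iff, Fin.forall_fin_two, imp_iff_not_or] using hv
  have hw' : w 0 ≠ 0 ∨ w 1 ≠ 0 := by simpa [funext_iff, Fin.forall_fin_two, imp_iff_not_or] using hw
  unfold ofHomogeneous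
  split_ifs <;> grind

lemma matrixMobius_smul {c : 𝕜} (hc : c ≠ 0) (M : Matrix (Fin 2) (Fin 2) 𝕜) (z : OnePoint 𝕜) :
    matrixMobius (c • M) z = matrixMobius M z := by
  rw [matrixMobius, smul_mulVec, ofHomogeneous_smul hc, matrixMobius]

lemma matrixMobius_eq_of_det_eq_zero {M : Matrix (Fin 2) (Fin 2) 𝕜} (hM : M.det = 0)
    {z w : OnePoint 𝕜} (hz : M *ᵥ toHomogeneous z ≠ 0) (hw : M *ᵥ toHomogeneous w ≠ 0) :
    matrixMobius M z = matrixMobius M w := by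
  refine ofHomogeneous_eq_of_det_eq_zero hz hw ?_
  have hmul : of ![M *ᵥ toHomogeneous z, M *ᵥ toHomogeneous w] =
      of ![toHomogeneous z, toHomogeneous w] * Mᵀ := by
    ext i j
    fin_cases i <;> simp [mul_apply, mulVec_eq_sum, mul_comm]
  rw [hmul, det_mul, det_transpose, hM, mul_zero]

lemma eq_zero_of_mulVec_toHomogeneous_eq_zero {M : Matrix (Fin 2) (Fin 2) 𝕜} {z w : OnePoint 𝕜}
    (hzw : z ≠ w) (hz : M *ᵥ toHomogeneous z = 0) (hw : M *ᵥ toHomogeneous w = 0) : M = 0 := by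
  refine funext fun i => eq_zero_of_mulVec_eq_zero (det_toHomogeneous_ne_zero hzw) (v := M i) ?_
  ext j
  fin_cases j
  · simpa [mulVec, dotProduct_comm] using congrFun hz i
  · simpa [mulVec, dotProduct_comm] using congrFun hw i

end HomogeneousCoordinates

section Continuity

variable {𝕜 : Type*} [NormedField 𝕜]

lemma continuousAt_ofHomogeneous {v : Fin 2 → 𝕜} (hv : v ≠ 0) :
    ContinuousAt ofHomogeneous v := by
  by_cases h1 : v 1 = 0
  · have h0 : v 0 ≠ 0 := fun h0 => hv (by ext i; fin_cases i <;> simp [h0, h1])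
    have hinv : ContinuousAt (Function.update (fun t : 𝕜 => ((t⁻¹ : 𝕜) : OnePoint 𝕜)) 0 ∞)
        (v 1 / v 0) := by
      rw [h1, zero_div, continuousAt_update_same]
      refine tendsto_coe_infty.comp ?_
      rw [coclosedCompact_eq_cocompact]
      exact tendsto_inv₀_nhdsNE_zero.mono_right Metric.cobounded_le_cocompact
    have hdiv : ContinuousAt (fun u : Fin 2 → 𝕜 => u 1 / u 0) v :=
      (continuousAt_apply 1 v).div (continuousAt_apply 0 v) h0
    refine (hinv.comp (f := fun u : Fin 2 → 𝕜 => u 1 / u 0) hdiv).congr ?_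
    filter_upwards [(continuousAt_apply 0 v).eventually_ne h0] with u hu
    by_cases hu1 : u 1 = 0 <;> simp [ofHomogeneous, hu, hu1]
  · have hdiv : ContinuousAt (fun u : Fin 2 → 𝕜 => ((u 0 / u 1 : 𝕜) : OnePoint 𝕜)) v :=
      continuous_coe.continuousAt.comp ((continuousAt_apply 0 v).div (continuousAt_apply 1 v) h1)
    refine hdiv.congr ?_
    filter_upwards [(continuousAt_apply 1 v).eventually_ne h1] with u hu
    simp [ofHomogeneous, hu]

variable [ProperSpace 𝕜]

/-- `toHomogeneous` itself is discontinuous at `∞`, where `[1 : t⁻¹]` has to replace `[t : 1]`. -/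
lemma exists_continuousAt_homogeneous (z₀ : OnePoint 𝕜) :
    ∃ s : OnePoint 𝕜 → Fin 2 → 𝕜, ContinuousAt s z₀ ∧ s z₀ = toHomogeneous z₀ ∧
      ∀ᶠ z in 𝓝 z₀, ∃ c : 𝕜, c ≠ 0 ∧ s z = c • toHomogeneous z := by
  induction z₀ using OnePoint.rec with
  | infty =>
    refine ⟨fun z => z.elim ![1, 0] fun t => ![1, t⁻¹], ?_, rfl, ?_⟩
    · rw [continuousAt_infty', coclosedCompact_eq_cocompact, ← Metric.cobounded_eq_cocompact]
      exact tendsto_const_nhds.matrixVecCons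
        (tendsto_inv₀_cobounded.matrixVecCons tendsto_const_nhds)
    · filter_upwards [isOpen_ne.mem_nhds (infty_ne_coe (0 : 𝕜))] with z hz
      induction z using OnePoint.rec with
      | infty => exact ⟨1, one_ne_zero, by simp⟩
      | coe t =>
        have ht : t ≠ 0 := by simpa using hz
        exact ⟨t⁻¹, inv_ne_zero ht, by simp [ht]⟩
  | coe t =>
    refine ⟨toHomogeneous, ?_, rfl, .of_forall fun z => ⟨1, one_ne_zero, (one_smul _ _).symm⟩⟩
    rw [continuousAt_coe]
    exact continuousAt_id.matrixVecCons continuousAt_const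

lemma tendsto_matrixMobius {α : Type*} {l : Filter α} {M : α → Matrix (Fin 2) (Fin 2) 𝕜}
    {z : α → OnePoint 𝕜} {M₀ : Matrix (Fin 2) (Fin 2) 𝕜} {z₀ : OnePoint 𝕜}
    (h : M₀ *ᵥ toHomogeneous z₀ ≠ 0) (hM : Tendsto M l (𝓝 M₀)) (hz : Tendsto z l (𝓝 z₀)) :
    Tendsto (fun a => matrixMobius (M a) (z a)) l (𝓝 (matrixMobius M₀ z₀)) := by
  obtain ⟨s, hs, hs₀, hsmul⟩ := exists_continuousAt_homogeneous z₀
  have hmulVec : Tendsto (fun a => M a *ᵥ s (z a)) l (𝓝 (M₀ *ᵥ toHomogeneous z₀)) :=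
    ((continuous_fst.matrix_mulVec continuous_snd).tendsto (M₀, toHomogeneous z₀)).comp
      (f := fun a => (M a, s (z a))) (hM.prodMk_nhds (hs₀ ▸ hs.tendsto.comp hz))
  refine ((continuousAt_ofHomogeneous h).tendsto.comp hmulVec).congr' ?_
  filter_upwards [hz.eventually hsmul] with a ⟨c, hc, ha⟩
  rw [Function.comp_apply, ha, mulVec_smul, ofHomogeneous_smul hc, matrixMobius]

end Continuity

section UltrafilterLimits

variable {α : Type*}

lemma exists_tendsto_nhds_or_tendsto_cocompact {X : Type*} [TopologicalSpace X]
    (u : Ultrafilter α) (f : α → X) :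
    (∃ x, Tendsto f u (𝓝 x)) ∨ Tendsto f u (cocompact X) := by
  refine or_iff_not_imp_left.mpr fun h => hasBasis_cocompact.tendsto_right_iff.mpr fun K hK => ?_
  refine Ultrafilter.eventually_not.mpr fun hKu => h ?_
  obtain ⟨x, -, hx⟩ := hK.ultrafilter_le_nhds' (u.map f) hKu
  exact ⟨x, hx⟩

lemma exists_tendsto_inv_norm_smul {E : Type*} [NormedAddCommGroup E] [NormedSpace ℝ E]
    [ProperSpace E] {u : Ultrafilter α} {f : α → E} (hf : ∀ᶠ a in u, f a ≠ 0) :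
    ∃ y, y ≠ 0 ∧ Tendsto (fun a => ‖f a‖⁻¹ • f a) u (𝓝 y) := by
  obtain ⟨y, hy, hfy⟩ := (isCompact_sphere (0 : E) 1).ultrafilter_le_nhds'
    (u.map fun a => ‖f a‖⁻¹ • f a) <| hf.mono fun a ha => by simp [norm_smul, ha]
  exact ⟨y, ne_zero_of_mem_unit_sphere ⟨y, hy⟩, hfy⟩

open scoped Matrix.Norms.Elementwise in
lemma exists_tendsto_smul_det_eq_zero {n : Type*} [Fintype n] [DecidableEq n] [Nonempty n]
    {u : Ultrafilter α} {A : α → Matrix n n ℝ} (hdet : ∀ a, (A a).det = 1)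
    (hA : Tendsto A u (cocompact _)) :
    ∃ (c : α → ℝ) (B : Matrix n n ℝ), (∀ a, c a ≠ 0) ∧ B ≠ 0 ∧ B.det = 0 ∧
      Tendsto (fun a => c a • A a) u (𝓝 B) := by
  have hne (a : α) : A a ≠ 0 := fun h => by simpa [h] using hdet a
  obtain ⟨B, hB, hlim⟩ := exists_tendsto_inv_norm_smul (.of_forall hne)
  refine ⟨fun a => ‖A a‖⁻¹, B, fun a => inv_ne_zero (norm_ne_zero_iff.mpr (hne a)), hB, ?_, hlim⟩
  have hinv : Tendsto (fun a => ‖A a‖⁻¹) u (𝓝 0) :=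
    tendsto_inv_atTop_zero.comp (tendsto_norm_cocompact_atTop.comp hA)
  have hdet_zero : Tendsto (fun a => (‖A a‖⁻¹ • A a).det) u (𝓝 0) := by
    simpa [det_smul, hdet] using hinv.pow (Fintype.card n)
  exact tendsto_nhds_unique ((continuous_id.matrix_det.tendsto B).comp hlim) hdet_zero

end UltrafilterLimits

lemma mobius_eq_matrixMobius (A : SpecialLinearGroup (Fin 2) ℂ) (z : OnePoint ℂ) :
    mobius A z = matrixMobius A z := by
  induction z using OnePoint.rec <;>
    simp [mobius, matrixMobius, ofHomogeneous]

section RealMatrices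

variable {B : Matrix (Fin 2) (Fin 2) ℝ} {z : OnePoint ℂ}

lemma mulVec_toHomogeneous_ne_zero_of_mem_upperHalfPlane' (hB : B ≠ 0)
    (hz : z ∈ upperHalfPlane') : B.map Complex.ofRealHom *ᵥ toHomogeneous z ≠ 0 := by
  obtain ⟨w, hw, rfl⟩ := hz
  contrapose! hB
  ext i j
  have hrow : (B i 0 : ℂ) * w + B i 1 = 0 := by
    simpa [mulVec, dotProduct, Fin.sum_univ_two] using congrFun hB i
  have h0 : B i 0 = 0 := by simpa [hw.ne'] using congrArg Complex.im hrow
  have h1 : B i 1 = 0 := by simpa [h0] using hrow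
  fin_cases j <;> simp [h0, h1]

lemma ofHomogeneous_mem_boundaryCircle {r : Fin 2 → ℝ} (hr : r ≠ 0) {v : Fin 2 → ℂ}
    (h : (Complex.ofReal ∘ r) ⬝ᵥ v = 0) : ofHomogeneous v ∈ boundaryCircle := by
  have hrel : (r 0 : ℂ) * v 0 + r 1 * v 1 = 0 := by simpa [dotProduct] using h
  unfold ofHomogeneous
  split_ifs with hv1
  · exact .inl rfl
  have hr0 : (r 0 : ℂ) ≠ 0 := by
    contrapose! hr with hr0
    have hr1 : r 1 = 0 := by simpa [hr0, hv1] using hrel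
    ext i
    fin_cases i
    exacts [Complex.ofReal_eq_zero.mp hr0, hr1]
  refine .inr ⟨-r 1 / r 0, congrArg _ ?_⟩
  push_cast
  rw [div_eq_div_iff hv1 hr0]
  linear_combination hrel

/-- A row vector killed by `B` gives a real linear equation for the points of the image of `B`. -/
lemma matrixMobius_mem_boundaryCircle (hB : B.det = 0) (z : OnePoint ℂ) :
    matrixMobius (B.map Complex.ofRealHom) z ∈ boundaryCircle := by
  obtain ⟨r, hr, hrB⟩ := exists_vecMul_eq_zero_iff.mpr hB
  refine ofHomogeneous_mem_boundaryCircle hr ?_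
  have hrB' : (Complex.ofReal ∘ r) ᵥ* B.map Complex.ofRealHom = 0 := by
    ext i
    exact (RingHom.map_vecMul Complex.ofRealHom B r i).symm.trans (by simp [hrB])
  rw [dotProduct_mulVec, hrB', zero_dotProduct]

lemma disjoint_boundaryCircle_upperHalfPlane' : Disjoint boundaryCircle upperHalfPlane' := by
  rw [Set.disjoint_left]
  rintro _ (rfl | ⟨r, rfl⟩) ⟨w, hw, h⟩
  · exact infty_ne_coe w h
  · simp [← coe_injective h] at hw

end RealMatrices

section RealMobius

/-- The instance on `SL(2, ℝ)` declared above is definitionally equal to Mathlib's, which it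
shadows. -/
lemma isClosedEmbedding_coe_specialLinearGroup :
    IsClosedEmbedding fun A : SpecialLinearGroup (Fin 2) ℝ => (A : Matrix (Fin 2) (Fin 2) ℝ) :=
  SpecialLinearGroup.isClosedEmbedding_val

lemma mobius_toC (A : SpecialLinearGroup (Fin 2) ℝ) (z : OnePoint ℂ) :
    mobius (toC A) z =
      matrixMobius ((A : Matrix (Fin 2) (Fin 2) ℝ).map Complex.ofRealHom) z :=
  mobius_eq_matrixMobius (toC A) z

lemma continuous_mobius_toC {X : Type*} [TopologicalSpace X]
    {A : X → SpecialLinearGroup (Fin 2) ℝ} {z : X → OnePoint ℂ}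
    (hA : Continuous A) (hz : Continuous z) : Continuous fun x => mobius (toC (A x)) (z x) := by
  have hmap : Continuous fun x => (A x : Matrix (Fin 2) (Fin 2) ℝ).map Complex.ofRealHom :=
    (continuous_induced_dom.matrix_map Complex.continuous_ofReal).comp hA
  simp_rw [mobius_toC]
  refine continuous_iff_continuousAt.mpr fun x => ?_
  have hne : (A x : Matrix (Fin 2) (Fin 2) ℝ).map Complex.ofRealHom *ᵥ toHomogeneous (z x) ≠ 0 :=
    fun h => toHomogeneous_ne_zero _ (eq_zero_of_mulVec_eq_zero (toC (A x)).det_ne_zero h)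
  exact tendsto_matrixMobius hne (hmap.tendsto x) (hz.tendsto x)

variable {α : Type*} {u : Ultrafilter α} {A : α → SpecialLinearGroup (Fin 2) ℝ}

lemma exists_singular_tendsto_mobius (hA : Tendsto A u (cocompact _)) :
    ∃ B : Matrix (Fin 2) (Fin 2) ℝ, B ≠ 0 ∧ B.det = 0 ∧
      ∀ (z : α → OnePoint ℂ) (z₀ : OnePoint ℂ), Tendsto z u (𝓝 z₀) →
        B.map Complex.ofRealHom *ᵥ toHomogeneous z₀ ≠ 0 →
        Tendsto (fun a => mobius (toC (A a)) (z a)) u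
          (𝓝 (matrixMobius (B.map Complex.ofRealHom) z₀)) := by
  obtain ⟨c, B, hc, hB, hdet, hlim⟩ := exists_tendsto_smul_det_eq_zero (fun a => (A a).det_coe)
    (isClosedEmbedding_coe_specialLinearGroup.tendsto_cocompact.comp hA)
  refine ⟨B, hB, hdet, fun z z₀ hz hne => ?_⟩
  have hlim' : Tendsto (fun a => (c a • (A a : Matrix (Fin 2) (Fin 2) ℝ)).map Complex.ofRealHom) u
      (𝓝 (B.map Complex.ofRealHom)) :=
    ((continuous_id.matrix_map Complex.continuous_ofReal).tendsto B).comp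
      (f := fun a => c a • (A a : Matrix (Fin 2) (Fin 2) ℝ)) hlim
  refine (tendsto_matrixMobius hne hlim' hz).congr fun a => ?_
  have hsmul : (c a • (A a : Matrix (Fin 2) (Fin 2) ℝ)).map Complex.ofRealHom =
      (c a : ℂ) • (A a : Matrix (Fin 2) (Fin 2) ℝ).map Complex.ofRealHom :=
    Matrix.map_smul' _ _ _ (map_mul Complex.ofRealHom)
  rw [hsmul, matrixMobius_smul (Complex.ofReal_ne_zero.mpr (hc a)),
    mobius_toC]

lemma exists_tendsto_of_tendsto_mobius_upperHalfPlane' {z : α → OnePoint ℂ} {z₀ w₀ : OnePoint ℂ}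
    (hz₀ : z₀ ∈ upperHalfPlane') (hw₀ : w₀ ∈ upperHalfPlane') (hz : Tendsto z u (𝓝 z₀))
    (hAz : Tendsto (fun a => mobius (toC (A a)) (z a)) u (𝓝 w₀)) :
    ∃ A₀, Tendsto A u (𝓝 A₀) := by
  refine (exists_tendsto_nhds_or_tendsto_cocompact u A).resolve_right fun hA => ?_
  obtain ⟨B, hB, hdet, hlim⟩ := exists_singular_tendsto_mobius hA
  have hw₀_eq : w₀ = matrixMobius (B.map Complex.ofRealHom) z₀ := tendsto_nhds_unique hAz <|
    hlim z z₀ hz (mulVec_toHomogeneous_ne_zero_of_mem_upperHalfPlane' hB hz₀)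
  exact Set.disjoint_left.mp disjoint_boundaryCircle_upperHalfPlane'
    (matrixMobius_mem_boundaryCircle hdet z₀) (hw₀_eq ▸ hw₀)

lemma exists_tendsto_of_tendsto_mobius_injective {ι : Type*} [Fintype ι]
    (hι : 2 < Fintype.card ι) {z : α → ι → OnePoint ℂ} {z₀ w₀ : ι → OnePoint ℂ}
    (hz₀ : z₀.Injective) (hw₀ : w₀.Injective)
    (hz : ∀ i, Tendsto (fun a => z a i) u (𝓝 (z₀ i)))
    (hAz : ∀ i, Tendsto (fun a => mobius (toC (A a)) (z a i)) u (𝓝 (w₀ i))) :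
    ∃ A₀, Tendsto A u (𝓝 A₀) := by
  refine (exists_tendsto_nhds_or_tendsto_cocompact u A).resolve_right fun hA => ?_
  obtain ⟨B, hB, hdet, hlim⟩ := exists_singular_tendsto_mobius hA
  let Killed (i : ι) : Prop := B.map Complex.ofRealHom *ᵥ toHomogeneous (z₀ i) = 0
  have hB' : B.map Complex.ofRealHom ≠ 0 := by
    rw [← Matrix.map_zero Complex.ofRealHom (map_zero _)]
    exact (Matrix.map_injective Complex.ofReal_injective).ne hB
  have hdet' : (B.map Complex.ofRealHom).det = 0 := by
    simpa [hdet] using (Complex.ofRealHom.map_det B).symm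
  have killed_unique {i j : ι} (hi : Killed i) (hj : Killed j) : i = j := by
    by_contra hij
    exact hB' (eq_zero_of_mulVec_toHomogeneous_eq_zero (hz₀.ne hij) hi hj)
  have survivor_unique {i j : ι} (hi : ¬ Killed i) (hj : ¬ Killed j) : i = j := by
    refine hw₀ ?_
    rw [tendsto_nhds_unique (hAz i) (hlim _ _ (hz i) hi),
      tendsto_nhds_unique (hAz j) (hlim _ _ (hz j) hj),
      matrixMobius_eq_of_det_eq_zero hdet' hi hj]
  obtain ⟨i, j, hij, hiff⟩ := Fintype.exists_ne_map_eq_of_card_lt Killed (by simpa using hι)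
  by_cases hi : Killed i
  · exact hij (killed_unique hi (hiff ▸ hi))
  · exact hij (survivor_unique hi (hiff ▸ hi))

end RealMobius

section Configurations

variable {k l : ℕ}

/-- The diagonal Möbius action of `SL(2, ℝ)` on tuples of points of the Riemann sphere. -/
noncomputable def diagonalMobius (A : SpecialLinearGroup (Fin 2) ℝ)
    (p : (Fin k → OnePoint ℂ) × (Fin l → OnePoint ℂ)) :
    (Fin k → OnePoint ℂ) × (Fin l → OnePoint ℂ) :=
  (fun i => mobius (toC A) (p.1 i), fun j => mobius (toC A) (p.2 j))

lemma continuous_diagonalMobius {X : Type*} [TopologicalSpace X]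
    {A : X → SpecialLinearGroup (Fin 2) ℝ} {p : X → (Fin k → OnePoint ℂ) × (Fin l → OnePoint ℂ)}
    (hA : Continuous A) (hp : Continuous p) : Continuous fun x => diagonalMobius (A x) (p x) :=
  .prodMk (continuous_pi fun _ => continuous_mobius_toC hA (by fun_prop))
    (continuous_pi fun _ => continuous_mobius_toC hA (by fun_prop))

lemma exists_tendsto_of_tendsto_diagonalMobius (hkl : 3 ≤ k ∨ 1 ≤ l) {α : Type*}
    {u : Ultrafilter α} {A : α → SpecialLinearGroup (Fin 2) ℝ}
    {p : α → (Fin k → OnePoint ℂ) × (Fin l → OnePoint ℂ)}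
    {q r : (Fin k → OnePoint ℂ) × (Fin l → OnePoint ℂ)}
    (hq : q ∈ configSpace k l) (hr : r ∈ configSpace k l) (hp : Tendsto p u (𝓝 q))
    (hAp : Tendsto (fun a => diagonalMobius (A a) (p a)) u (𝓝 r)) :
    ∃ A₀, Tendsto A u (𝓝 A₀) := by
  obtain ⟨-, hq_inj, hq_mem, -⟩ := hq
  obtain ⟨-, hr_inj, hr_mem, -⟩ := hr
  obtain hk | hl := hkl
  · exact exists_tendsto_of_tendsto_mobius_injective (by rwa [Fintype.card_fin]) hq_inj hr_inj
      (tendsto_pi_nhds.mp hp.fst_nhds) (tendsto_pi_nhds.mp hAp.fst_nhds)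
  · exact exists_tendsto_of_tendsto_mobius_upperHalfPlane' (hq_mem ⟨0, hl⟩) (hr_mem ⟨0, hl⟩)
      (tendsto_pi_nhds.mp hp.snd_nhds ⟨0, hl⟩) (tendsto_pi_nhds.mp hAp.snd_nhds ⟨0, hl⟩)

end Configurations

theorem sl2R_mobius_action_proper_general {k l : ℕ} (hkl : 3 ≤ k ∨ 1 ≤ l)
    {K : Set (((Fin k → OnePoint ℂ) × (Fin l → OnePoint ℂ)) ×
      ((Fin k → OnePoint ℂ) × (Fin l → OnePoint ℂ)))}
    (hK : IsCompact K) (hKΩ : K ⊆ configSpace k l ×ˢ configSpace k l) :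
    IsCompact ((fun p : SpecialLinearGroup (Fin 2) ℝ × configSpace k l =>
      (diagonalMobius p.1 p.2.val, p.2.val)) ⁻¹' K) := by
  set Φ := fun p : SpecialLinearGroup (Fin 2) ℝ × configSpace k l =>
    (diagonalMobius p.1 p.2.val, p.2.val)
  have hΦ : Continuous Φ :=
    .prodMk (continuous_diagonalMobius continuous_fst (by fun_prop)) (by fun_prop)
  refine isCompact_iff_ultrafilter_le_nhds'.mpr fun u hu => ?_
  obtain ⟨⟨r, q⟩, hrq, hlim⟩ := hK.ultrafilter_le_nhds' (u.map Φ) hu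
  obtain ⟨hr, hq⟩ := hKΩ hrq
  replace hlim : Tendsto Φ u (𝓝 (r, q)) := hlim
  obtain ⟨A₀, hA₀⟩ :=
    exists_tendsto_of_tendsto_diagonalMobius hkl hq hr hlim.snd_nhds hlim.fst_nhds
  have hu_lim : Tendsto id u (𝓝 (A₀, (⟨q, hq⟩ : configSpace k l))) :=
    hA₀.prodMk_nhds (tendsto_subtype_rng.mpr hlim.snd_nhds)
  have hΦ_lim : Φ (A₀, ⟨q, hq⟩) = (r, q) :=
    tendsto_nhds_unique ((hΦ.tendsto _).comp hu_lim) hlim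
  exact ⟨(A₀, ⟨q, hq⟩), by rwa [Set.mem_preimage, hΦ_lim], hu_lim⟩

/-- For `k ≥ 1`, `k + 2l ≥ 3`, the action map `Φ : SL(2,ℝ) × Ω → Ω × Ω`,
`Φ(A, (x, w)) = (A • (x, w), (x, w))`, of the diagonal Möbius action of `SL(2,ℝ)` on the
space `Ω` of configurations of `k` pairwise distinct boundary points and `l` pairwise
distinct interior points of the upper half-plane is proper: preimages of compact sets are
compact. -/
theorem sl2R_mobius_action_proper
    (k l : ℕ) (hk : 1 ≤ k) (hkl : 3 ≤ k + 2 * l)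
    (Φ : Matrix.SpecialLinearGroup (Fin 2) ℝ × configSpace k l →
      ((Fin k → OnePoint ℂ) × (Fin l → OnePoint ℂ)) ×
        ((Fin k → OnePoint ℂ) × (Fin l → OnePoint ℂ)))
    (hΦ : ∀ p : Matrix.SpecialLinearGroup (Fin 2) ℝ × configSpace k l,
      Φ p = ((fun i => mobius (toC p.1) ((p.2 : (Fin k → OnePoint ℂ) × (Fin l → OnePoint ℂ)).1 i),
              fun j => mobius (toC p.1) ((p.2 : (Fin k → OnePoint ℂ) × (Fin l → OnePoint ℂ)).2 j)),
             (p.2 : (Fin k → OnePoint ℂ) × (Fin l → OnePoint ℂ)))) :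
    ∀ K : Set (((Fin k → OnePoint ℂ) × (Fin l → OnePoint ℂ)) ×
        ((Fin k → OnePoint ℂ) × (Fin l → OnePoint ℂ))), IsCompact K →
      K ⊆ (configSpace k l) ×ˢ (configSpace k l) → IsCompact (Φ ⁻¹' K) := by
  intro K hK hKΩ
  rw [funext hΦ]
  exact sl2R_mobius_action_proper_general (by omega) hK hKΩ
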